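/- arXiv:1802.09836 — 2 statements merged into one kernel-verified Lean document; each statement's English description precedes it below -/
import Mathlib

section
/- Let n ≥ 2 and let g, g' ∈ SL_n(ℂ). If conjugation by gg* and by g'g'* agree on all traceless matrices, i.e. (gg*)X(gg*)⁻¹ = (g'g'*)X(g'g'*)⁻¹ for every X ∈ M_n(ℂ) with tr(X) = 0, then gg* = g'g'*. (This is the injectivity of the adjoint representation Ad restricted to the Cartan model c(SL_n(ℂ)/SU(n)) = {gg* : g ∈ SL_n(ℂ)}.) -/
open Matrix

/-!
If conjugation by `A` and by `B` agree on the traceless matrices, then `B⁻¹ * A` commutes with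
every off-diagonal matrix unit, so it is a scalar `c`. Equality of determinants makes `c` an `n`-th
root of unity, and positivity of the diagonal entries of `A = c • B` and `B` leaves only `c = 1`.
-/

open scoped ComplexOrder

section Conjugation

variable {ι R : Type*} [Fintype ι] [DecidableEq ι] [CommRing R] {A B : Matrix ι ι R}

lemma commute_inv_mul_of_conj_eq (hA : IsUnit A.det) (hB : IsUnit B.det) {X : Matrix ι ι R}
    (h : A * X * A⁻¹ = B * X * B⁻¹) : Commute X (B⁻¹ * A) := by
  have hAX : A * X = B * X * B⁻¹ * A := by
    rw [← h, nonsing_inv_mul_cancel_right A (A * X) hA]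
  calc
    X * (B⁻¹ * A) = B⁻¹ * (B * X * B⁻¹ * A) := by
      simp only [Matrix.mul_assoc, nonsing_inv_mul_cancel_left B _ hB]
    _ = B⁻¹ * A * X := by rw [← hAX, Matrix.mul_assoc]

lemma exists_eq_smul_of_conj_eq_on_traceless (hA : IsUnit A.det) (hB : IsUnit B.det)
    (h : ∀ X : Matrix ι ι R, X.trace = 0 → A * X * A⁻¹ = B * X * B⁻¹) :
    ∃ c : R, A = c • B := by
  obtain ⟨c, hc⟩ : B⁻¹ * A ∈ Set.range (scalar ι) :=
    mem_range_scalar_of_commute_single fun i j hij ↦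
      commute_inv_mul_of_conj_eq hA hB (h _ (trace_single_eq_of_ne i j 1 hij))
  refine ⟨c, ?_⟩
  calc
    A = B * (B⁻¹ * A) := (mul_nonsing_inv_cancel_left B A hB).symm
    _ = c • B := by rw [← hc, scalar_apply, ← smul_one_eq_diagonal, Matrix.mul_smul, Matrix.mul_one]

end Conjugation

-- `pow_left_inj₀` needs a linear order, which the complex numbers lack.
lemma eq_of_pow_eq_pow_of_pos {R : Type*} [CommRing R] [NoZeroDivisors R] [PartialOrder R]
    [IsStrictOrderedRing R] {a b : R} {n : ℕ} (ha : 0 < a) (hb : 0 < b) (hn : n ≠ 0)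
    (h : a ^ n = b ^ n) : a = b := by
  have hsum : 0 < ∑ i ∈ Finset.range n, a ^ i * b ^ (n - 1 - i) :=
    Finset.sum_pos (fun i _ ↦ mul_pos (pow_pos ha i) (pow_pos hb _))
      (Finset.nonempty_range_iff.2 hn)
  have hfactor : (∑ i ∈ Finset.range n, a ^ i * b ^ (n - 1 - i)) * (a - b) = 0 := by
    rw [(Commute.all a b).geom_sum₂_mul, h, sub_self]
  exact sub_eq_zero.1 ((mul_eq_zero.1 hfactor).resolve_left hsum.ne')

lemma posDef_mul_conjTranspose_self_of_isUnit_det {ι R : Type*} [Fintype ι] [DecidableEq ι]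
    [CommRing R] [NoZeroDivisors R] [PartialOrder R] [StarRing R] [StarOrderedRing R]
    {A : Matrix ι ι R} (hA : IsUnit A.det) : (A * Aᴴ).PosDef :=
  .mul_conjTranspose_self A (vecMul_injective_of_isUnit ((isUnit_iff_isUnit_det A).2 hA))

section PosDef

variable {ι K : Type*} [Fintype ι] [DecidableEq ι] [Field K] [PartialOrder K] [StarRing K]
  [StarOrderedRing K] {A B : Matrix ι ι K}

lemma eq_of_posDef_of_eq_smul_of_det_eq (hA : A.PosDef) (hB : B.PosDef) (hdet : A.det = B.det)
    {c : K} (hAB : A = c • B) : A = B := by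
  cases isEmpty_or_nonempty ι with
  | inl _ => exact Subsingleton.elim A B
  | inr hι =>
    obtain ⟨i⟩ := hι
    have hB_det : B.det ≠ 0 := ((isUnit_iff_isUnit_det B).1 hB.isUnit).ne_zero
    have hc_pow : c ^ Fintype.card ι = 1 :=
      mul_right_cancel₀ hB_det (by rw [← det_smul, ← hAB, hdet, one_mul])
    have hentry : A i i = c * B i i := by rw [hAB, Matrix.smul_apply, smul_eq_mul]
    have hdiag : A i i = B i i :=
      eq_of_pow_eq_pow_of_pos hA.diag_pos hB.diag_pos (Fintype.card_pos_iff.2 ⟨i⟩).ne'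
        (by rw [hentry, mul_pow, hc_pow, one_mul])
    have hc : c = 1 :=
      mul_right_cancel₀ hB.diag_pos.ne' (by rw [← hentry, hdiag, one_mul])
    rw [hAB, hc, one_smul]

theorem cartan_model_Ad_injective_general (hA : A.PosDef) (hB : B.PosDef) (hdet : A.det = B.det)
    (h : ∀ X : Matrix ι ι K, X.trace = 0 → A * X * A⁻¹ = B * X * B⁻¹) : A = B := by
  obtain ⟨c, hAB⟩ := exists_eq_smul_of_conj_eq_on_traceless
    ((isUnit_iff_isUnit_det A).1 hA.isUnit) ((isUnit_iff_isUnit_det B).1 hB.isUnit) h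
  exact eq_of_posDef_of_eq_smul_of_det_eq hA hB hdet hAB

end PosDef

/-- Injectivity of the adjoint representation restricted to the Cartan model
`{g gᴴ : g ∈ SL_n(ℂ)}`: if conjugation by `g * gᴴ` and by `g' * g'ᴴ` agree on all
traceless matrices, then `g * gᴴ = g' * g'ᴴ`. -/
theorem cartan_model_Ad_injective (n : ℕ) (hn : 2 ≤ n)
    (g g' : Matrix (Fin n) (Fin n) ℂ) (hg : g.det = 1) (hg' : g'.det = 1)
    (h : ∀ X : Matrix (Fin n) (Fin n) ℂ, X.trace = 0 →
      (g * gᴴ) * X * (g * gᴴ)⁻¹ = (g' * g'ᴴ) * X * (g' * g'ᴴ)⁻¹) :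
    g * gᴴ = g' * g'ᴴ :=
  cartan_model_Ad_injective_general
    (posDef_mul_conjTranspose_self_of_isUnit_det (by simp only [hg, isUnit_one]))
    (posDef_mul_conjTranspose_self_of_isUnit_det (by simp only [hg', isUnit_one]))
    (by simp only [det_mul, det_conjTranspose, hg, hg']) h
end

section
/- Let Cl_n be the Clifford algebra of the quadratic form Q(v) = −‖v‖² on Euclidean ℝⁿ, with canonical map ι and standard orthonormal basis (e₁, …, e_n). For skew-symmetric linear maps u, v : ℝⁿ → ℝⁿ set underline(u) := ¼ Σ_j ι(e_j)·ι(u(e_j)) and underline(v) := ¼ Σ_j ι(e_j)·ι(v(e_j)). Then the commutator [underline(u), underline(v)] = underline(u)·underline(v) − underline(v)·underline(u) represents the skew-symmetric operator u∘v − v∘u: for every ξ ∈ ℝⁿ, [[underline(u), underline(v)], ι(ξ)] = ι((u∘v − v∘u)(ξ)); equivalently, [underline(u), underline(v)] = ¼ Σ_j ι(e_j)·ι((u∘v − v∘u)(e_j)). -/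
/-- The quadratic form `Q(v) = −‖v‖²` on Euclidean `ℝⁿ`. -/
noncomputable def Qneg (n : ℕ) : QuadraticForm ℝ (Fin n → ℝ) :=
  QuadraticMap.weightedSumSquares ℝ (fun _ : Fin n => (-1 : ℝ))

/-- The bivector `underline(u) = ¼ Σ_j ι(e_j)·ι(u(e_j))` representing a skew-symmetric
operator `u` in the Clifford algebra of `Q(v) = −‖v‖²`. -/
noncomputable def bivectorOf {n : ℕ} (u : (Fin n → ℝ) →ₗ[ℝ] (Fin n → ℝ)) :
    CliffordAlgebra (Qneg n) :=
  (1 / 4 : ℝ) • ∑ j, CliffordAlgebra.ι (Qneg n) (Pi.single j 1) *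
    CliffordAlgebra.ι (Qneg n) (u (Pi.single j 1))

/-!
Let `e`, `f` be dual frames for the polar form `B` of `Q`, so that `x = ∑ j, B (f j) x • e j`. The
Clifford relation gives `[a b, x] = B b x • a - B a x • b` for vectors `a`, `b`, `x`. Summing over
the frames, `S u = -½ ∑ j, e j * u (f j)` satisfies `[S u, x] = u x` for skew-adjoint `u`. As
`[S u, ·]` is a derivation, `[S u, S v] = -½ ∑ j, (u (e j) * v (f j) + e j * u (v (f j)))`, and
skew-adjointness of `u` moves it across the invariant tensor `∑ j, e j ⊗ f j`, turning
`u (e j) * v (f j)` into `-e j * v (u (f j))`. Euclidean space is the case of the standard basis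
`e` and `f = -½ e`.
-/

open CliffordAlgebra QuadraticMap
open LinearMap (BilinForm)

section DualFrame

variable {R M κ : Type*} [CommRing R] [AddCommGroup M] [Module R M] [Fintype κ]

/-- Two finite families `e`, `f` are dual frames for the bilinear form `B` if every vector has the
expansion `x = ∑ j, B (f j) x • e j`. A basis and its dual basis for a nondegenerate symmetric form
are the main example; neither family is required to be linearly independent. -/
def IsDualFrame (B : BilinForm R M) (e f : κ → M) : Prop :=
  ∀ x, ∑ j, B (f j) x • e j = x

namespace IsDualFrame

variable {B : BilinForm R M} {e f : κ → M}

theorem eq_zero_of_forall_apply_eq_zero (h : IsDualFrame B e f) {x : M} (hx : ∀ y, B y x = 0) :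
    x = 0 := by
  simpa only [hx, zero_smul, Finset.sum_const_zero] using (h x).symm

protected theorem symm (h : IsDualFrame B e f) (hB : B.IsSymm) : IsDualFrame B f e := by
  intro x
  rw [← sub_eq_zero]
  refine h.eq_zero_of_forall_apply_eq_zero fun y => ?_
  calc B y (∑ j, B (e j) x • f j - x)
      = ∑ j, B (e j) x * B (f j) y - B y x := by
        simp only [map_sub, map_sum, map_smul, smul_eq_mul, fun j => hB.eq y (f j)]
    _ = B (∑ j, B (f j) y • e j) x - B y x := by
        simp only [map_sum, map_smul, LinearMap.sum_apply, LinearMap.smul_apply, smul_eq_mul,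
          mul_comm]
    _ = 0 := by rw [h y, sub_self]

-- Invariance of the tensor `∑ j, e j ⊗ f j` under skew-adjoint maps, tested on bilinear maps.
theorem sum_apply_apply_eq_neg {P : Type*} [AddCommGroup P] [Module R P]
    (h : IsDualFrame B e f) (hB : B.IsSymm) {u : Module.End R M} (hu : B.IsSkewAdjoint u)
    (g : M →ₗ[R] M →ₗ[R] P) :
    ∑ j, g (u (e j)) (f j) = -∑ j, g (e j) (u (f j)) := by
  have skew (j k : κ) : B (f k) (u (e j)) = -B (e j) (u (f k)) := by
    rw [← map_neg, hB.eq, hu (e j) (f k), Pi.neg_apply]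
  calc ∑ j, g (u (e j)) (f j)
      = ∑ j, ∑ k, B (f k) (u (e j)) • g (e k) (f j) := by
        refine Finset.sum_congr rfl fun j _ => ?_
        conv_lhs => rw [← h (u (e j))]
        simp only [map_sum, map_smul, LinearMap.sum_apply, LinearMap.smul_apply]
    _ = -∑ k, g (e k) (∑ j, B (e j) (u (f k)) • f j) := by
        rw [Finset.sum_comm]
        simp only [skew, neg_smul, Finset.sum_neg_distrib, map_sum, map_smul]
    _ = -∑ k, g (e k) (u (f k)) := by simp only [h.symm hB _]

end IsDualFrame

end DualFrame

theorem lie_mul_eq_add {A : Type*} [Ring A] (a b c : A) : ⁅a, b * c⁆ = ⁅a, b⁆ * c + b * ⁅a, c⁆ := by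
  simp only [Ring.lie_def]
  noncomm_ring

section FrameBivector

variable {R M κ : Type*} [CommRing R] [AddCommGroup M] [Module R M] [Fintype κ]
variable {Q : QuadraticForm R M} {e f : κ → M}

theorem isSymm_polarBilin (Q : QuadraticForm R M) : BilinForm.IsSymm Q.polarBilin :=
  ⟨polar_comm Q⟩

theorem lie_ι_mul_ι_ι (a b x : M) :
    ⁅ι Q a * ι Q b, ι Q x⁆ = polar Q b x • ι Q a - polar Q a x • ι Q b := by
  calc ⁅ι Q a * ι Q b, ι Q x⁆
      = ι Q a * (ι Q b * ι Q x + ι Q x * ι Q b) - (ι Q a * ι Q x + ι Q x * ι Q a) * ι Q b := by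
        rw [Ring.lie_def]
        noncomm_ring
    _ = polar Q b x • ι Q a - polar Q a x • ι Q b := by
        rw [ι_mul_ι_add_swap, ι_mul_ι_add_swap, ← Algebra.commutes, ← Algebra.smul_def,
          ← Algebra.smul_def]

variable [Invertible (2 : R)]

/-- The bivector `-½ ∑ j, e j * u (f j)` attached to an endomorphism `u` and dual frames `e`, `f`
for the polar form of `Q`. The factor is chosen so that, for skew-adjoint `u`, the commutator with
this bivector acts on vectors as `u`. -/
def frameBivector (Q : QuadraticForm R M) (e f : κ → M) (u : Module.End R M) :
    CliffordAlgebra Q :=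
  (-⅟2 : R) • ∑ j, ι Q (e j) * ι Q (u (f j))

theorem lie_frameBivector_ι (h : IsDualFrame Q.polarBilin e f) {u : Module.End R M}
    (hu : Q.polarBilin.IsSkewAdjoint u) (x : M) :
    ⁅frameBivector Q e f u, ι Q x⁆ = ι Q (u x) := by
  have expand_left : ∑ j, polar Q (u (f j)) x • ι Q (e j) = -ι Q (u x) := by
    have skew (j : κ) : polar Q (u (f j)) x = -polar Q (f j) (u x) := by
      rw [← polar_neg_right]
      exact hu (f j) x
    conv_rhs => rw [← h (u x)]
    simp only [skew, neg_smul, Finset.sum_neg_distrib, map_sum, map_smul, polarBilin_apply_apply]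
  have expand_right : ∑ j, polar Q (e j) x • ι Q (u (f j)) = ι Q (u x) := by
    conv_rhs => rw [← h.symm (isSymm_polarBilin Q) x]
    simp only [map_sum, map_smul, polarBilin_apply_apply]
  calc ⁅frameBivector Q e f u, ι Q x⁆
      = (-⅟2 : R) • ∑ j, ⁅ι Q (e j) * ι Q (u (f j)), ι Q x⁆ := by
        simp only [frameBivector, Ring.lie_def, smul_mul_assoc, mul_smul_comm, ← smul_sub,
          Finset.sum_mul, Finset.mul_sum, Finset.sum_sub_distrib]
    _ = (-⅟2 : R) • (-ι Q (u x) - ι Q (u x)) := by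
        simp only [lie_ι_mul_ι_ι, Finset.sum_sub_distrib, expand_left, expand_right]
    _ = ι Q (u x) := by
        rw [neg_smul, ← smul_neg, neg_sub, sub_neg_eq_add, ← two_smul R, invOf_smul_smul]

theorem lie_frameBivector (h : IsDualFrame Q.polarBilin e f) {u : Module.End R M}
    (hu : Q.polarBilin.IsSkewAdjoint u) (v : Module.End R M) :
    ⁅frameBivector Q e f u, frameBivector Q e f v⁆ = frameBivector Q e f ⁅u, v⁆ := by
  have transfer : ∑ j, ι Q (u (e j)) * ι Q (v (f j)) = -∑ j, ι Q (e j) * ι Q (v (u (f j))) :=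
    h.sum_apply_apply_eq_neg (isSymm_polarBilin Q) hu
      ((LinearMap.mul R (CliffordAlgebra Q)).compl₁₂ (ι Q) (ι Q ∘ₗ v))
  calc ⁅frameBivector Q e f u, frameBivector Q e f v⁆
      = (-⅟2 : R) • ∑ j, ⁅frameBivector Q e f u, ι Q (e j) * ι Q (v (f j))⁆ := by
        simp only [frameBivector.eq_def Q e f v, Ring.lie_def, smul_mul_assoc, mul_smul_comm,
          ← smul_sub, Finset.sum_mul, Finset.mul_sum, Finset.sum_sub_distrib]
    _ = (-⅟2 : R) • ∑ j, (ι Q (u (e j)) * ι Q (v (f j)) + ι Q (e j) * ι Q (u (v (f j)))) := by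
        simp only [lie_mul_eq_add, lie_frameBivector_ι h hu]
    _ = (-⅟2 : R) • ∑ j, ι Q (e j) * ι Q (u (v (f j)) - v (u (f j))) := by
        rw [Finset.sum_add_distrib, transfer, neg_add_eq_sub, ← Finset.sum_sub_distrib]
        simp only [map_sub, mul_sub]
    _ = frameBivector Q e f ⁅u, v⁆ := rfl

theorem bivector_commutator_represents_general (h : IsDualFrame Q.polarBilin e f)
    {u v : Module.End R M} (hu : Q.polarBilin.IsSkewAdjoint u)
    (hv : Q.polarBilin.IsSkewAdjoint v) :
    (∀ ξ, ⁅⁅frameBivector Q e f u, frameBivector Q e f v⁆, ι Q ξ⁆ = ι Q (⁅u, v⁆ ξ)) ∧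
      ⁅frameBivector Q e f u, frameBivector Q e f v⁆ = frameBivector Q e f ⁅u, v⁆ := by
  have huv := lie_frameBivector h hu v
  refine ⟨fun ξ => ?_, huv⟩
  rw [huv, lie_frameBivector_ι h]
  simpa using BilinForm.isSkewAdjoint_bracket Q.polarBilin (by simpa using hu) (by simpa using hv)

end FrameBivector

section Euclidean

variable {n : ℕ}

theorem polar_Qneg (x y : Fin n → ℝ) : polar (Qneg n) x y = -2 * ∑ i, x i * y i := by
  simp only [polar, Qneg, weightedSumSquares_apply, Pi.add_apply, smul_eq_mul, Finset.mul_sum,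
    ← Finset.sum_sub_distrib]
  exact Finset.sum_congr rfl fun i _ => by ring

theorem isDualFrame_Qneg :
    IsDualFrame (Qneg n).polarBilin (fun j : Fin n => Pi.single j (1 : ℝ))
      (fun j => (-⅟2 : ℝ) • Pi.single j (1 : ℝ)) := by
  intro x
  have coord (j : Fin n) : polar (Qneg n) ((-⅟2 : ℝ) • Pi.single j (1 : ℝ)) x = x j := by
    simp [polar_Qneg, Pi.single_apply]
  simp only [polarBilin_apply_apply, coord]
  exact (pi_eq_sum_univ' x).symm

theorem isSkewAdjoint_polarBilin_Qneg_iff {u : (Fin n → ℝ) →ₗ[ℝ] (Fin n → ℝ)} :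
    (Qneg n).polarBilin.IsSkewAdjoint u ↔
      ∀ x y : Fin n → ℝ, ∑ i, u x i * y i = -∑ i, x i * u y i := by
  refine forall₂_congr fun x y => ?_
  simp only [polarBilin_apply_apply, polar_Qneg, Pi.neg_apply, mul_neg, Finset.sum_neg_distrib]
  constructor <;> intro h <;> linarith

theorem bivectorOf_eq_frameBivector (u : (Fin n → ℝ) →ₗ[ℝ] (Fin n → ℝ)) :
    bivectorOf u = frameBivector (Qneg n) (fun j : Fin n => Pi.single j (1 : ℝ))
      (fun j => (-⅟2 : ℝ) • Pi.single j (1 : ℝ)) u := by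
  simp only [bivectorOf, frameBivector, map_smul, mul_smul_comm, ← Finset.smul_sum, smul_smul]
  norm_num

end Euclidean

/-- For skew-symmetric operators `u, v` on Euclidean `ℝⁿ`, the commutator
`[underline(u), underline(v)]` represents `u∘v − v∘u`: for every `ξ`,
`[[underline(u), underline(v)], ι(ξ)] = ι((u∘v − v∘u)(ξ))`; equivalently,
`[underline(u), underline(v)] = underline(u∘v − v∘u)`. -/
theorem bivector_commutator_represents (n : ℕ)
    (u v : (Fin n → ℝ) →ₗ[ℝ] (Fin n → ℝ))
    (hu : ∀ x y : Fin n → ℝ, ∑ i, u x i * y i = -∑ i, x i * u y i)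
    (hv : ∀ x y : Fin n → ℝ, ∑ i, v x i * y i = -∑ i, x i * v y i) :
    (∀ ξ : Fin n → ℝ,
      (bivectorOf u * bivectorOf v - bivectorOf v * bivectorOf u) *
          CliffordAlgebra.ι (Qneg n) ξ -
        CliffordAlgebra.ι (Qneg n) ξ *
          (bivectorOf u * bivectorOf v - bivectorOf v * bivectorOf u) =
      CliffordAlgebra.ι (Qneg n) ((u ∘ₗ v - v ∘ₗ u) ξ)) ∧
    bivectorOf u * bivectorOf v - bivectorOf v * bivectorOf u =
      bivectorOf (u ∘ₗ v - v ∘ₗ u) := by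
  simp only [bivectorOf_eq_frameBivector]
  exact bivector_commutator_represents_general isDualFrame_Qneg
    (isSkewAdjoint_polarBilin_Qneg_iff.mpr hu) (isSkewAdjoint_polarBilin_Qneg_iff.mpr hv)
end
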